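/- Let d ≥ 2 be an integer, γ > 1 a real number, c = γ − d − 1, and suppose p, r, ν, κ satisfy: p > 1, r > 1, 1/r = 2/p + (2ν+κ)/d − 1, κ < d/r, ((d−1)/2)(1 − 2/p) < ν < d(p−1)/p, 2r ≥ p, max{ν,κ} > 0, ν + κ ≥ (d−1)(1/r − 1/p), max{0, d + p(c+ν)} < d(r−p)/r + p(ν+κ+1) < γ p (r−1)/r, γ p (r−1)/r − d(r−p)/r − p(ν+κ+1) > γ, and p > r/(r−1). Set m = p(r−1)/r − (p/γ)(κ+1+ν) − d(r−p)/(rγ). Fix β ∈ (0,1) and let A > 0 be such that the ball condition ‖θ̂‖_{u_ν,p} ≤ A on radial bounds is R_β-invariant. Then there exists M > 0 such that the convex set E^M = {ϑ ∈ RL^p_{u_ν} : ϑ admits a radial bound θ̂ with ‖θ̂‖_{u_ν,p} ≤ A, and (∫_{|η|>ρ} |ϑ(η)|^p u_ν(η)^p dη)^{1/p} ≤ M ρ^{−γm/p} for all ρ > β} is invariant under R_β. -/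

import Mathlib

open MeasureTheory Set RealInnerProductSpace
open scoped ENNReal NNReal

noncomputable section

/-- `ℝ^d` with the Euclidean norm. -/
abbrev Ed (d : ℕ) := EuclideanSpace ℝ (Fin d)

/-- `ℂ^d` with the Euclidean norm. -/
abbrev EdC (d : ℕ) := EuclideanSpace ℂ (Fin d)

/-- A function on `ℝ^d` is radial if its value depends only on the norm of the argument. -/
def IsRadial {d : ℕ} {α : Type*} (f : Ed d → α) : Prop :=
  ∀ x y : Ed d, ‖x‖ = ‖y‖ → f x = f y

/-- The pairing `⟨η, v⟩` of a real vector with a complex vector, extended ℂ-bilinearly. -/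
def pairC {d : ℕ} (η : Ed d) (v : EdC d) : ℂ := ∑ i, (η i : ℂ) * v i

/-- The Leray projection `P_η v = v − (⟨v,η⟩/|η|²) η`, extended ℂ-bilinearly. -/
def lerayC {d : ℕ} (η : Ed d) (v : EdC d) : EdC d :=
  (WithLp.equiv 2 (Fin d → ℂ)).symm
    (fun i => v i - (pairC η v / ((‖η‖ ^ 2 : ℝ) : ℂ)) * (η i : ℂ))

/-- The integrand of the nonlinear part of the renormalization operator (complex fields). -/
def renormKernelC (d : ℕ) (γ : ℝ) (ϑ : Ed d → EdC d) (η : Ed d) (t : ℝ) (x : Ed d) : EdC d :=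
  (t ^ (-(γ - d - 1)) * Real.exp (‖η‖ ^ γ * (1 - t ^ γ))) •
    (pairC η (ϑ (t • η - x)) • lerayC η (ϑ x))

/-- Absolute convergence of the integrals defining `R_β[ϑ](η)` (complex fields). -/
def RenormDefinedC (d : ℕ) (γ β : ℝ) (ϑ : Ed d → EdC d) (η : Ed d) : Prop :=
  IntegrableOn (fun q : ℝ × Ed d => renormKernelC d γ ϑ η q.1 q.2)
    (Set.Ioc (1 : ℝ) β⁻¹ ×ˢ Set.univ)

/-- The renormalization operator `R_β` on complex vector fields. -/
def renormC (d : ℕ) (γ β : ℝ) (ϑ : Ed d → EdC d) (η : Ed d) : EdC d :=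
  (β ^ (γ - d - 1) * Real.exp (‖η‖ ^ γ * (1 - β ^ (-γ)))) • ϑ (β⁻¹ • η)
    + (Complex.I * (γ : ℂ)) •
        ∫ t in Set.Ioc (1 : ℝ) β⁻¹, ∫ x : Ed d, renormKernelC d γ ϑ η t x

/-- The Leray projection `P_η v = v − (⟨v,η⟩/|η|²) η` for real vector fields. -/
def lerayR {d : ℕ} (η v : Ed d) : Ed d := v - (⟪v, η⟫ / ‖η‖ ^ 2) • η

/-- The integrand of the nonlinear part of the renormalization operator (real fields). -/
def renormKernelR (d : ℕ) (γ : ℝ) (ψ : Ed d → Ed d) (η : Ed d) (t : ℝ) (x : Ed d) : Ed d :=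
  (t ^ (-(γ - d - 1)) * Real.exp (‖η‖ ^ γ * (1 - t ^ γ))) •
    (⟪η, ψ (t • η - x)⟫ • lerayR η (ψ x))

/-- Absolute convergence of the integrals defining `R_β[ψ](η)` (real fields). -/
def RenormDefinedR (d : ℕ) (γ β : ℝ) (ψ : Ed d → Ed d) (η : Ed d) : Prop :=
  IntegrableOn (fun q : ℝ × Ed d => renormKernelR d γ ψ η q.1 q.2)
    (Set.Ioc (1 : ℝ) β⁻¹ ×ˢ Set.univ)

/-- The renormalization operator `R_β` on real vector fields. -/
def renormR (d : ℕ) (γ β : ℝ) (ψ : Ed d → Ed d) (η : Ed d) : Ed d :=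
  (β ^ (γ - d - 1) * Real.exp (‖η‖ ^ γ * (1 - β ^ (-γ)))) • ψ (β⁻¹ • η)
    - γ • ∫ t in Set.Ioc (1 : ℝ) β⁻¹, ∫ x : Ed d, renormKernelR d γ ψ η t x

/-- First coordinate (`x_{d-1}`) of the projection onto the azimuthal plane. -/
def azim1 {d : ℕ} (x : Ed d) : ℝ := if h : d - 2 < d then x ⟨d - 2, h⟩ else 0

/-- Second coordinate (`x_d`) of the projection onto the azimuthal plane. -/
def azim2 {d : ℕ} (x : Ed d) : ℝ := if h : d - 1 < d then x ⟨d - 1, h⟩ else 0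

/-- The norm `|x_a|` of the azimuthal projection. -/
def normA {d : ℕ} (x : Ed d) : ℝ := Real.sqrt (azim1 x ^ 2 + azim2 x ^ 2)

/-- `cos∠_η(x) = ⟨x_a, η_a⟩ / (|x_a| |η_a|)`. -/
def cosAng {d : ℕ} (η x : Ed d) : ℝ :=
  (azim1 x * azim1 η + azim2 x * azim2 η) / (normA x * normA η)

/-- `sin∠_η(x) = (η_{d−1} x_d − η_d x_{d−1}) / (|x_a| |η_a|)`. -/
def sinAng {d : ℕ} (η x : Ed d) : ℝ :=
  (azim1 η * azim2 x - azim2 η * azim1 x) / (normA x * normA η)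

/-- The integrand of the nonlinear part of the azimuthal renormalization operator. -/
def aKernel (d : ℕ) (γ : ℝ) (ψ : Ed d → ℝ) (η : Ed d) (t : ℝ) (x : Ed d) : ℝ :=
  t ^ (-(γ - d - 1)) * Real.exp (‖η‖ ^ γ * (1 - t ^ γ)) *
    (ψ x * ψ (t • η - x) * cosAng η x * sinAng η (t • η - x))

/-- Absolute convergence of the integrals defining the azimuthal `R_β[ψ](η)`. -/
def ARenormDefined (d : ℕ) (γ β : ℝ) (ψ : Ed d → ℝ) (η : Ed d) : Prop :=
  IntegrableOn (fun q : ℝ × Ed d => aKernel d γ ψ η q.1 q.2)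
    (Set.Ioc (1 : ℝ) β⁻¹ ×ˢ Set.univ)

/-- The azimuthal renormalization operator `R_β` on scalar functions. -/
def arenorm (d : ℕ) (γ β : ℝ) (ψ : Ed d → ℝ) (η : Ed d) : ℝ :=
  β ^ (γ - d - 1) * Real.exp (‖η‖ ^ γ * (1 - β ^ (-γ))) * ψ (β⁻¹ • η)
    + γ * normA η * ∫ t in Set.Ioc (1 : ℝ) β⁻¹, ∫ x : Ed d, aKernel d γ ψ η t x

/-- Weighted `L^p` norm `(∫ |f|^p w^p)^{1/p}` of a scalar function, valued in `ℝ≥0∞`. -/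
def wLpNorm {d : ℕ} (w : Ed d → ℝ) (p : ℝ) (f : Ed d → ℝ) : ℝ≥0∞ :=
  (∫⁻ x : Ed d, ENNReal.ofReal (|f x| ^ p * w x ^ p)) ^ (1 / p)

/-- Weighted `L^p` norm of a `ℂ^d`-valued function, valued in `ℝ≥0∞`. -/
def wLpNormC {d : ℕ} (w : Ed d → ℝ) (p : ℝ) (f : Ed d → EdC d) : ℝ≥0∞ :=
  (∫⁻ x : Ed d, ENNReal.ofReal (‖f x‖ ^ p * w x ^ p)) ^ (1 / p)

/-- The weight `u_ν(x) = e^{|x|} |x|^ν`. -/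
def uWeight (ν : ℝ) {d : ℕ} (x : Ed d) : ℝ := Real.exp ‖x‖ * ‖x‖ ^ ν

/-- The weight `v_ν(x) = e^{(b/2)|x|} |x|^ν`. -/
def vWeight (b ν : ℝ) {d : ℕ} (x : Ed d) : ℝ := Real.exp (b / 2 * ‖x‖) * ‖x‖ ^ ν

/-- Membership in `RL^p_{u_ν}`: fields dominated a.e. by a radial function in `L^p_{u_ν}`. -/
def MemRL (d : ℕ) (p ν : ℝ) (ϑ : Ed d → EdC d) : Prop :=
  AEStronglyMeasurable ϑ volume ∧ ∃ g : Ed d → ℝ, Measurable g ∧ IsRadial g ∧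
    wLpNorm (uWeight ν) p g < ⊤ ∧ ∀ᵐ x : Ed d, ‖ϑ x‖ ≤ g x

/-- Membership in `RL^p_{u_ν}` with a radial bound of norm at most `A`. -/
def MemRLBall (d : ℕ) (p ν A : ℝ) (ϑ : Ed d → EdC d) : Prop :=
  AEStronglyMeasurable ϑ volume ∧ ∃ g : Ed d → ℝ, Measurable g ∧ IsRadial g ∧
    wLpNorm (uWeight ν) p g ≤ ENNReal.ofReal A ∧ ∀ᵐ x : Ed d, ‖ϑ x‖ ≤ g x

/-- Membership in the set `M` of functions bounded by `k |η|^σ e^{−b|η|}`. -/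
def memM {d : ℕ} (k b σ : ℝ) (ψ : Ed d → ℝ) : Prop :=
  Measurable ψ ∧
    ∀ᵐ η : Ed d, η ≠ 0 → |ψ η| < k * ‖η‖ ^ σ * Real.exp (-b * ‖η‖)

/-- Inclusion of a real vector into `ℂ^d`. -/
def toC {d : ℕ} (v : Ed d) : EdC d :=
  (WithLp.equiv 2 (Fin d → ℂ)).symm (fun i => (v i : ℂ))

/-- The azimuthal unit vector field `e_{d−1}(y) = (0,…,0,−y_d,y_{d−1})/|y_a|`. -/
def azVec (d : ℕ) (y : Ed d) : Ed d :=
  (WithLp.equiv 2 (Fin d → ℝ)).symm (fun i =>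
    if (i : ℕ) = d - 2 then -azim2 y / normA y
    else if (i : ℕ) = d - 1 then azim1 y / normA y
    else 0)

/-- The Leray self-similar ansatz
`v_*(y,t) = i (T−t)^{(d+1−γ)/γ} ψ(y (T−t)^{1/γ}) e_{d−1}(y)`. -/
def vfun (d : ℕ) (γ : ℝ) (ψ : Ed d → ℝ) (T : ℝ) (y : Ed d) (t : ℝ) : EdC d :=
  (Complex.I *
      ((((T - t) ^ (((d : ℝ) + 1 - γ) / γ) * ψ (((T - t) ^ (1 / γ)) • y)) : ℝ) : ℂ)) •
    toC (azVec d y)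

end

/-- The equitightness (tail) bound: `(∫_{|η|>ρ} |ϑ|^p u_ν^p)^{1/p} ≤ M ρ^{−γm/p}`
for all `ρ > β`. -/
def tailBound (d : ℕ) (p ν γ m M β : ℝ) (ϑ : Ed d → EdC d) : Prop :=
  ∀ ρ : ℝ, β < ρ →
    (∫⁻ η in {η : Ed d | ρ < ‖η‖}, ENNReal.ofReal (‖ϑ η‖ ^ p * uWeight ν η ^ p)) ^ (1 / p) ≤
      ENNReal.ofReal (M * ρ ^ (-(γ * m / p)))

lemma rpow_le_exp_aux (b q : ℝ) (hb : 0 ≤ b) (hq : 0 < q) :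
    ∃ C : ℝ, 0 < C ∧ ∀ s : ℝ, 0 ≤ s → s ^ b ≤ C * Real.exp (q * s) := by
  rcases hb.eq_or_lt with rfl | hb
  · refine ⟨1, one_pos, fun s hs => ?_⟩
    rw [Real.rpow_zero, one_mul]
    exact Real.one_le_exp (by positivity)
  · refine ⟨(b / q) ^ b, by positivity, fun s hs => ?_⟩
    have h : s ≤ (b / q) * Real.exp (q * s / b) := by
      have h' := Real.add_one_le_exp (q * s / b)
      have : s = (b / q) * (q * s / b) := by field_simp
      calc s = (b / q) * (q * s / b) := this
        _ ≤ _ := by gcongr; linarith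
    calc s ^ b ≤ ((b / q) * Real.exp (q * s / b)) ^ b := Real.rpow_le_rpow hs h hb.le
      _ = _ := by
        rw [Real.mul_rpow (by positivity) (by positivity), ← Real.exp_mul]
        congr 2; field_simp

lemma rpow_bdd_aux (b e : ℝ) (t : ℝ) (ht : 1 ≤ t) (htb : t ≤ b⁻¹) :
    t ^ e ≤ b⁻¹ ^ |e| := by
  calc t ^ e ≤ t ^ |e| := Real.rpow_le_rpow_of_exponent_le ht (le_abs_self e)
    _ ≤ _ := Real.rpow_le_rpow (by linarith) htb (abs_nonneg e)

lemma ratio_aux (a β : ℝ) (hβ : 0 < β) :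
    ∃ C : ℝ, 0 < C ∧ ∀ X Y Z : ℝ, β ≤ X → β ≤ 1 → 0 < Y → Y ≤ Z → X ≤ Y + Z → Z ≤ X + Y →
      X ^ a * Real.exp X ≤ C * (Z ^ a * (Real.exp Y * Real.exp Z)) := by
  obtain ⟨C, hC, h⟩ := rpow_le_exp_aux |a| 1 (abs_nonneg a) one_pos
  refine ⟨2 ^ |a| + β⁻¹ ^ |a| * (C * Real.exp 1), by positivity, ?_⟩
  intro X Y Z hX hβ1 hY hYZ hXYZ hZ
  have hX0 : 0 < X := by linarith
  have hZ0 : 0 < Z := by linarith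
  have key : (X / Z) ^ a ≤ (2 ^ |a| + β⁻¹ ^ |a| * (C * Real.exp 1)) * Real.exp (Y + Z - X) := by
    have he : 1 ≤ Real.exp (Y + Z - X) := Real.one_le_exp (by linarith)
    rcases le_total 0 a with ha | ha
    · rw [abs_of_nonneg ha]
      have h1 : (X / Z) ^ a ≤ 2 ^ a := by
        apply Real.rpow_le_rpow (by positivity) _ ha
        rw [div_le_iff₀ hZ0]; linarith
      have h2 : 0 ≤ β⁻¹ ^ a * (C * Real.exp 1) := by positivity
      have h3 : (0:ℝ) ≤ 2 ^ a := by positivity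
      nlinarith
    · have e1 : (X / Z) ^ a = (Z / X) ^ |a| := by
        rw [abs_of_nonpos ha, ← inv_div Z X, Real.inv_rpow (by positivity), Real.rpow_neg (by positivity)]
      have e2 : Z / X ≤ β⁻¹ * (1 + (Y + Z - X)) := by
        rw [div_le_iff₀ hX0]
        have hb : 1 ≤ β⁻¹ * X := by
          rw [inv_mul_eq_div, le_div_iff₀ hβ]; linarith
        have hb1 : 1 ≤ β⁻¹ := (one_le_inv₀ hβ).2 hβ1
        have hD : 0 ≤ Y + Z - X := by linarith
        nlinarith
      have e3 := h (1 + (Y + Z - X)) (by linarith)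
      rw [one_mul, Real.exp_add] at e3
      have h3 : (0:ℝ) ≤ 2 ^ |a| * Real.exp (Y + Z - X) := by positivity
      calc (X / Z) ^ a = (Z / X) ^ |a| := e1
        _ ≤ (β⁻¹ * (1 + (Y + Z - X))) ^ |a| := Real.rpow_le_rpow (by positivity) e2 (abs_nonneg a)
        _ = β⁻¹ ^ |a| * (1 + (Y + Z - X)) ^ |a| := Real.mul_rpow (by positivity) (by linarith)
        _ ≤ β⁻¹ ^ |a| * (C * (Real.exp 1 * Real.exp (Y + Z - X))) := by gcongr
        _ ≤ _ := by linarith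
  have e4 : X ^ a = (X / Z) ^ a * Z ^ a := by
    rw [← Real.mul_rpow (by positivity) (by positivity)]; congr 1; field_simp
  have e5 : Real.exp (Y + Z - X) * Real.exp X = Real.exp Y * Real.exp Z := by
    rw [← Real.exp_add, ← Real.exp_add]; congr 1; ring
  have hZa : 0 < Z ^ a := by positivity
  calc X ^ a * Real.exp X = (X / Z) ^ a * (Z ^ a * Real.exp X) := by rw [e4]; ring
    _ ≤ ((2 ^ |a| + β⁻¹ ^ |a| * (C * Real.exp 1)) * Real.exp (Y + Z - X)) * (Z ^ a * Real.exp X) := by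
        gcongr
    _ = (2 ^ |a| + β⁻¹ ^ |a| * (C * Real.exp 1)) * (Z ^ a * (Real.exp (Y + Z - X) * Real.exp X)) := by ring
    _ = _ := by rw [e5]

lemma time_aux (θ γ : ℝ) (hθ : 0 ≤ θ) (hθ1 : θ ≤ 1) (hγ : 1 ≤ γ) (N t : ℝ) (hN : 0 < N)
    (ht : 1 < t) : N ^ (γ * θ) * Real.exp (N ^ γ * (1 - t ^ γ)) ≤ (t - 1) ^ (-θ) := by
  have h1 : t ≤ t ^ γ := by
    simpa using Real.rpow_le_rpow_of_exponent_le ht.le hγ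
  have hX : 0 < N ^ γ := by positivity
  set X := N ^ γ with hXd
  rw [Real.rpow_mul hN.le, ← hXd]
  have ht1 : 0 < t - 1 := by linarith
  have h2 : Real.exp (X * (1 - t ^ γ)) ≤ Real.exp (-(X * (t - 1))) := by
    apply Real.exp_le_exp.2; nlinarith
  have h3 : (X * (t - 1)) ^ θ ≤ Real.exp (X * (t - 1)) := by
    set s := X * (t - 1)
    have hs : 0 < s := by positivity
    have := Real.add_one_le_exp s
    rcases le_total s 1 with h | h
    · exact (Real.rpow_le_one hs.le h hθ).trans (by linarith)
    · calc s ^ θ ≤ s ^ (1:ℝ) := Real.rpow_le_rpow_of_exponent_le h hθ1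
        _ ≤ _ := by rw [Real.rpow_one]; linarith
  rw [Real.mul_rpow hX.le ht1.le] at h3
  calc X ^ θ * Real.exp (X * (1 - t ^ γ)) ≤ X ^ θ * Real.exp (-(X * (t - 1))) := by gcongr
    _ = (X ^ θ * (t - 1) ^ θ) * (t - 1) ^ (-θ) * Real.exp (-(X * (t - 1))) := by
      rw [Real.rpow_neg ht1.le]; field_simp
    _ ≤ Real.exp (X * (t - 1)) * (t - 1) ^ (-θ) * Real.exp (-(X * (t - 1))) := by gcongr
    _ = _ := by rw [Real.exp_neg]; field_simp

lemma point_aux (θ γ a ν s σ c β : ℝ) (hβ : 0 < β) (hβ1 : β ≤ 1) (hθ : 0 ≤ θ) (hθ1 : θ ≤ 1)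
    (hγ : 1 ≤ γ) (hs : s + ν + 1 = γ * θ + a) (hσ : σ = ν - a) (hσ0 : 0 ≤ σ) :
    ∃ C : ℝ, 0 < C ∧ ∀ N t Y Z : ℝ, β ≤ N → 1 < t → t ≤ β⁻¹ → 0 < Y → Y ≤ Z →
      t * N ≤ Y + Z → Z ≤ t * N + Y →
      N ^ s * (Real.exp N * N ^ ν) * (t ^ (-c) * Real.exp (N ^ γ * (1 - t ^ γ)) * N) ≤
        C * (t - 1) ^ (-θ) * (Y ^ (-ν) * (1 + Y) ^ (-σ)) * (Real.exp Y * Y ^ ν) *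
          (Real.exp Z * Z ^ ν) := by
  obtain ⟨C, hC, h⟩ := ratio_aux a β hβ
  refine ⟨β⁻¹ ^ |-c| * β⁻¹ ^ |-a| * C * (1 + 2 / β) ^ σ, by positivity, ?_⟩
  intro N t Y Z hN ht htb hY hYZ hX1 hX2
  have hN0 : 0 < N := by linarith
  have hZ0 : 0 < Z := by linarith
  have ht0 : 0 < t := by linarith
  have htN : N ≤ t * N := by nlinarith
  have r := h (t * N) Y Z (by linarith) hβ1 hY hYZ hX1 hX2
  have r1 := time_aux θ γ hθ hθ1 hγ N t hN0 ht
  have r2 := rpow_bdd_aux β (-c) t ht.le htb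
  have r3 := rpow_bdd_aux β (-a) t ht.le htb
  have r4 : Z ^ (a - ν) ≤ (1 + 2 / β) ^ σ * (1 + Y) ^ (-σ) := by
    have hz : 1 + Y ≤ (1 + 2 / β) * Z := by
      have : 1 ≤ (2 / β) * Z := by
        rw [div_mul_eq_mul_div, le_div_iff₀ hβ]; linarith
      linarith
    have : a - ν = -σ := by linarith
    rw [this, Real.rpow_neg hZ0.le, Real.rpow_neg (by positivity), ← div_eq_mul_inv,
      inv_eq_one_div, div_le_div_iff₀ (by positivity) (by positivity), one_mul,
      ← Real.mul_rpow (by positivity) (by positivity)]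
    exact Real.rpow_le_rpow (by positivity) hz hσ0
  have e1 : N ^ s * N ^ ν * N = N ^ (γ * θ) * N ^ a := by
    rw [← Real.rpow_add hN0, ← Real.rpow_add hN0, ← hs, Real.rpow_add hN0 _ 1, Real.rpow_one]
  have e2 : N ^ a = t ^ (-a) * (t * N) ^ a := by
    rw [Real.mul_rpow ht0.le hN0.le, Real.rpow_neg ht0.le]; field_simp
  have e3 : Z ^ a = Z ^ (a - ν) * Z ^ ν := by
    rw [← Real.rpow_add hZ0]; congr 1; ring
  have e4 : Y ^ (-ν) * Y ^ ν = 1 := by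
    rw [← Real.rpow_add hY]; simp
  have ht1 : 0 < t - 1 := by linarith
  calc N ^ s * (Real.exp N * N ^ ν) * (t ^ (-c) * Real.exp (N ^ γ * (1 - t ^ γ)) * N)
      = t ^ (-c) * (N ^ (γ * θ) * Real.exp (N ^ γ * (1 - t ^ γ))) * t ^ (-a) *
        ((t * N) ^ a * Real.exp N) := by
        rw [show N ^ s * (Real.exp N * N ^ ν) * (t ^ (-c) * Real.exp (N ^ γ * (1 - t ^ γ)) * N)
          = (N ^ s * N ^ ν * N) * Real.exp N * t ^ (-c) * Real.exp (N ^ γ * (1 - t ^ γ)) by ring,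
          e1, e2]; ring
    _ ≤ β⁻¹ ^ |-c| * (t - 1) ^ (-θ) * β⁻¹ ^ |-a| * ((t * N) ^ a * Real.exp (t * N)) := by
        gcongr
    _ ≤ β⁻¹ ^ |-c| * (t - 1) ^ (-θ) * β⁻¹ ^ |-a| * (C * (Z ^ a * (Real.exp Y * Real.exp Z))) := by
        gcongr
    _ = β⁻¹ ^ |-c| * (t - 1) ^ (-θ) * β⁻¹ ^ |-a| *
        (C * (Z ^ (a - ν) * Z ^ ν * (Real.exp Y * Real.exp Z))) := by rw [e3]
    _ ≤ β⁻¹ ^ |-c| * (t - 1) ^ (-θ) * β⁻¹ ^ |-a| *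
        (C * (((1 + 2 / β) ^ σ * (1 + Y) ^ (-σ)) * Z ^ ν * (Real.exp Y * Real.exp Z))) := by
        gcongr
    _ = (β⁻¹ ^ |-c| * (t - 1) ^ (-θ) * β⁻¹ ^ |-a| *
        (C * (((1 + 2 / β) ^ σ * (1 + Y) ^ (-σ)) * Z ^ ν * (Real.exp Y * Real.exp Z)))) *
        (Y ^ (-ν) * Y ^ ν) := by rw [e4, mul_one]
    _ = _ := by ring

lemma lintegral_jensen {α : Type*} [MeasurableSpace α] (μ : Measure α) (p : ℝ) (hp : 1 < p)
    (J h : α → ℝ≥0∞) (hJ : AEMeasurable J μ) (hh : AEMeasurable h μ) :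
    (∫⁻ x, J x * h x ∂μ) ^ p ≤ (∫⁻ x, J x ∂μ) ^ (p - 1) * ∫⁻ x, J x * h x ^ p ∂μ := by
  have hp0 : 0 < p := by linarith
  have hpq := Real.HolderConjugate.conjExponent hp
  set q := p.conjExponent with hq
  have hq0 : 0 < q := hpq.symm.pos
  have hsum : 1 / q + 1 / p = 1 := by
    have := hpq.inv_add_inv_eq_one; simp only [one_div]; linarith
  have H := ENNReal.lintegral_mul_le_Lp_mul_Lq μ hpq.symm (f := fun x => J x ^ (1 / q))
    (g := fun x => J x ^ (1 / p) * h x) (hJ.pow_const _) ((hJ.pow_const _).mul hh)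
  have e : ∀ x, J x * h x = ((fun x => J x ^ (1 / q)) * (fun x => J x ^ (1 / p) * h x)) x := by
    intro x
    simp only [Pi.mul_apply]
    rw [← mul_assoc, ← ENNReal.rpow_add_of_nonneg _ _ (by positivity) (by positivity), hsum,
      ENNReal.rpow_one]
  have e1 : ∀ x, (J x ^ (1 / q)) ^ q = J x := by
    intro x
    rw [← ENNReal.rpow_mul, one_div, inv_mul_cancel₀ hq0.ne', ENNReal.rpow_one]
  have e2 : ∀ x, (J x ^ (1 / p) * h x) ^ p = J x * h x ^ p := by
    intro x
    rw [ENNReal.mul_rpow_of_nonneg _ _ hp0.le, ← ENNReal.rpow_mul, one_div,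
      inv_mul_cancel₀ hp0.ne', ENNReal.rpow_one]
  simp only [e1, e2] at H
  calc (∫⁻ x, J x * h x ∂μ) ^ p
      ≤ ((∫⁻ x, J x ∂μ) ^ (1 / q) * (∫⁻ x, J x * h x ^ p ∂μ) ^ (1 / p)) ^ p := by
        simp_rw [e]; exact ENNReal.rpow_le_rpow (by simpa only [e] using H) hp0.le
    _ = _ := by
      rw [ENNReal.mul_rpow_of_nonneg _ _ hp0.le, ← ENNReal.rpow_mul, ← ENNReal.rpow_mul]
      congr 1
      · congr 1
        have : 1 / q = 1 - 1 / p := by linarith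
        rw [this]; field_simp
      · rw [one_div, inv_mul_cancel₀ hp0.ne', ENNReal.rpow_one]

lemma lintegral_smul_le {d : ℕ} (t : ℝ) (ht : 1 ≤ t) (F : Ed d → ℝ≥0∞) (hF : Measurable F) :
    ∫⁻ η : Ed d, F (t • η) ≤ ∫⁻ η, F η := by
  have ht0 : t ≠ 0 := by linarith
  have h := Measure.map_addHaar_smul (volume : Measure (Ed d)) ht0
  have : ∫⁻ η : Ed d, F (t • η) = ∫⁻ η, F η ∂(Measure.map (fun x : Ed d => t • x) volume) := by
    rw [lintegral_map hF (by fun_prop)]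
  rw [this, h, lintegral_smul_measure, smul_eq_mul]
  calc _ ≤ 1 * ∫⁻ η, F η := by
        gcongr
        rw [← ENNReal.ofReal_one]
        apply ENNReal.ofReal_le_ofReal
        rw [abs_of_nonneg (by positivity)]
        exact inv_le_one_of_one_le₀ (one_le_pow₀ ht)
    _ = _ := one_mul _

/-- Young-type bound for the iterated integral. -/
lemma young_aux {d : ℕ} (p b : ℝ) (hp : 1 < p) (T : ℝ → ℝ≥0∞) (hT : Measurable T)
    (k F : Ed d → ℝ≥0∞) (hk : Measurable k) (hF : Measurable F) :
    ∫⁻ η : Ed d, (∫⁻ t in Ioc 1 b, ∫⁻ y : Ed d, T t * k y * F (t • η - y)) ^ p ≤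
      ((∫⁻ t in Ioc 1 b, T t) * ∫⁻ y, k y) ^ (p - 1) *
        (((∫⁻ t in Ioc 1 b, T t) * ∫⁻ y, k y) * ∫⁻ x, F x ^ p) := by
  set μ : Measure (ℝ × Ed d) := (volume.restrict (Ioc (1:ℝ) b)).prod volume with hμ
  have hJm : Measurable (fun q : ℝ × Ed d => T q.1 * k q.2) := by fun_prop
  have hJ : ∫⁻ q, T q.1 * k q.2 ∂μ = (∫⁻ t in Ioc 1 b, T t) * ∫⁻ y, k y :=
    lintegral_prod_mul hT.aemeasurable hk.aemeasurable
  have hpt : ∀ η : Ed d, (∫⁻ t in Ioc 1 b, ∫⁻ y : Ed d, T t * k y * F (t • η - y)) ^ p ≤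
      ((∫⁻ t in Ioc 1 b, T t) * ∫⁻ y, k y) ^ (p - 1) *
        ∫⁻ q, T q.1 * k q.2 * F (q.1 • η - q.2) ^ p ∂μ := by
    intro η
    have hm : Measurable (fun q : ℝ × Ed d => F (q.1 • η - q.2)) := by fun_prop
    have := lintegral_jensen μ p hp (fun q => T q.1 * k q.2) (fun q => F (q.1 • η - q.2))
      hJm.aemeasurable hm.aemeasurable
    rw [hJ] at this
    refine le_trans (le_of_eq ?_) this
    have hprod := lintegral_prod (μ := volume.restrict (Ioc (1:ℝ) b)) (ν := (volume : Measure (Ed d)))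
      (fun q : ℝ × Ed d => T q.1 * k q.2 * F (q.1 • η - q.2)) (hJm.mul hm).aemeasurable
    rw [hμ, hprod]
  refine (lintegral_mono hpt).trans ?_
  have hm2 : Measurable (fun z : Ed d × (ℝ × Ed d) =>
      T z.2.1 * k z.2.2 * F (z.2.1 • z.1 - z.2.2) ^ p) := by fun_prop
  rw [lintegral_const_mul _ hm2.lintegral_prod_right']
  gcongr
  rw [lintegral_lintegral_swap hm2.aemeasurable]
  calc ∫⁻ q : ℝ × Ed d, ∫⁻ η : Ed d, T q.1 * k q.2 * F (q.1 • η - q.2) ^ p ∂volume ∂μ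
      ≤ ∫⁻ q, T q.1 * k q.2 * (∫⁻ x, F x ^ p) ∂μ := by
        have hae : ∀ᵐ q ∂μ, q.1 ∈ Ioc 1 b := by
          have : ∀ᵐ t ∂(volume.restrict (Ioc (1:ℝ) b)), t ∈ Ioc 1 b :=
            ae_restrict_mem measurableSet_Ioc
          exact Measure.quasiMeasurePreserving_fst.ae this
        refine lintegral_mono_ae ?_
        filter_upwards [hae] with q hq
        rw [lintegral_const_mul _ (by fun_prop)]
        have h1 := lintegral_smul_le q.1 hq.1.le (fun x : Ed d => F (x - q.2) ^ p) (by fun_prop)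
        rw [lintegral_sub_right_eq_self (fun x => F x ^ p) q.2] at h1
        exact mul_le_mul' le_rfl h1
    _ = _ := by rw [lintegral_mul_const _ hJm, hJ]

lemma weight_aux (d : ℕ) (hd : 2 ≤ d) (ν σ q : ℝ) (hq : 0 < q) (hν : ν * q < d)
    (_hσ : 0 ≤ σ) (hνσ : d < (ν + σ) * q) :
    ∫⁻ y : Ed d, ENNReal.ofReal (‖y‖ ^ (-ν) * (1 + ‖y‖) ^ (-σ)) ^ q < ⊤ := by
  have : Nontrivial (Ed d) := by
    have : Nonempty (Fin d) := ⟨⟨0, by omega⟩⟩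
    infer_instance
  set f : ℝ → ℝ := fun s => (s ^ (-ν) * (1 + s) ^ (-σ)) ^ q with hf
  have hfm : Measurable f := by fun_prop
  have key : Integrable (fun y : Ed d => f ‖y‖) := by
    rw [integrable_fun_norm_addHaar]
    rw [finrank_euclideanSpace_fin]
    have hmeas : Measurable (fun y : ℝ => y ^ (d - 1) • f y) := by
      simp only [smul_eq_mul]; fun_prop
    have expr : ∀ s : ℝ, 0 < s → s ^ (d - 1) • f s =
        s ^ ((d : ℝ) - 1 - ν * q) * (1 + s) ^ (-(σ * q)) := by
      intro s hs
      simp only [hf, smul_eq_mul]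
      rw [Real.mul_rpow (by positivity) (by positivity), ← Real.rpow_mul hs.le,
        ← Real.rpow_mul (by positivity), ← Real.rpow_natCast s (d - 1), ← mul_assoc,
        ← Real.rpow_add hs]
      congr 2
      · push_cast [Nat.cast_sub (by omega : 1 ≤ d)]; ring
      · ring
    rw [← Ioc_union_Ioi_eq_Ioi (zero_le_one (α := ℝ))]
    refine IntegrableOn.union ?_ ?_
    · have h1 : IntegrableOn (fun s : ℝ => s ^ ((d : ℝ) - 1 - ν * q)) (Ioc 0 1) := by
        have := intervalIntegral.intervalIntegrable_rpow' (a := 0) (b := 1)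
          (r := (d : ℝ) - 1 - ν * q) (by linarith)
        rwa [intervalIntegrable_iff_integrableOn_Ioc_of_le zero_le_one] at this
      refine h1.mono' hmeas.aestronglyMeasurable ?_
      filter_upwards [ae_restrict_mem measurableSet_Ioc] with s hs
      have hs0 : 0 < s := hs.1
      rw [expr s hs0, Real.norm_of_nonneg (by positivity)]
      refine mul_le_of_le_one_right (by positivity) ?_
      exact Real.rpow_le_one_of_one_le_of_nonpos (by linarith) (by nlinarith)
    · have h1 : IntegrableOn (fun s : ℝ => s ^ ((d : ℝ) - 1 - ν * q - σ * q)) (Ioi 1) :=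
        integrableOn_Ioi_rpow_of_lt (by nlinarith) one_pos
      refine h1.mono' hmeas.aestronglyMeasurable ?_
      filter_upwards [ae_restrict_mem measurableSet_Ioi] with s hs
      have hs1 : 1 < s := hs
      have hs0 : 0 < s := by linarith
      rw [expr s hs0, Real.norm_of_nonneg (by positivity), sub_eq_add_neg _ (σ * q),
        Real.rpow_add hs0]
      gcongr ?_ * ?_
      exact Real.rpow_le_rpow_of_nonpos hs0 (by linarith) (by nlinarith)
  have e : ∀ y : Ed d, ENNReal.ofReal (‖y‖ ^ (-ν) * (1 + ‖y‖) ^ (-σ)) ^ q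
      = ENNReal.ofReal (f ‖y‖) := by
    intro y
    rw [ENNReal.ofReal_rpow_of_nonneg (by positivity) hq.le]
  simp_rw [e]
  exact key.lintegral_lt_top

lemma time_int (b θ : ℝ) (hb : 1 ≤ b) (hθ1 : θ < 1) :
    ∫⁻ t in Ioc 1 b, ENNReal.ofReal ((t - 1) ^ (-θ)) < ⊤ := by
  have h := (intervalIntegral.intervalIntegrable_rpow' (a := 0) (b := b - 1)
    (r := -θ) (by linarith)).comp_sub_right 1
  simp only [zero_add, sub_add_cancel] at h
  rw [intervalIntegrable_iff_integrableOn_Ioc_of_le hb] at h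
  exact Integrable.lintegral_lt_top h

lemma pairC_le {d : ℕ} (η : Ed d) (v : EdC d) : ‖pairC η v‖ ≤ ‖η‖ * ‖v‖ := by
  have h : pairC η v = inner ℂ (toC η) v := by
    simp only [pairC, toC, PiLp.inner_apply, RCLike.inner_apply]
    refine Finset.sum_congr rfl fun i _ => ?_
    simp [mul_comm]
  have h2 : ‖toC η‖ = ‖η‖ := by
    simp [toC, EuclideanSpace.norm_eq]
  rw [h, ← h2]
  exact norm_inner_le_norm _ _

lemma lerayC_le {d : ℕ} (η : Ed d) (v : EdC d) : ‖lerayC η v‖ ≤ 2 * ‖v‖ := by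
  have h2 : ‖toC η‖ = ‖η‖ := by
    simp [toC, EuclideanSpace.norm_eq]
  have h : lerayC η v = v - (pairC η v / ((‖η‖ ^ 2 : ℝ) : ℂ)) • toC η := by
    ext i; simp [lerayC, toC]
  rw [h]
  refine (norm_sub_le _ _).trans ?_
  have : ‖(pairC η v / ((‖η‖ ^ 2 : ℝ) : ℂ)) • toC η‖ ≤ ‖v‖ := by
    rw [norm_smul, norm_div, h2, Complex.norm_real, Real.norm_of_nonneg (by positivity)]
    rcases eq_or_ne ‖η‖ 0 with h0 | h0
    · simp [h0]
    · have hp : 0 < ‖η‖ := by positivity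
      have := pairC_le η v
      rw [div_mul_eq_mul_div, div_le_iff₀ (by positivity)]
      nlinarith
  linarith

lemma kernel_le {d : ℕ} (γ : ℝ) (ϑ : Ed d → EdC d) (η : Ed d) (t : ℝ) (ht : 0 ≤ t) (x : Ed d) :
    ‖renormKernelC d γ ϑ η t x‖ ≤ 2 * ((t ^ (-(γ - d - 1)) * Real.exp (‖η‖ ^ γ * (1 - t ^ γ))) *
      ‖η‖) * (‖ϑ x‖ * ‖ϑ (t • η - x)‖) := by
  rw [renormKernelC, norm_smul, norm_smul, Real.norm_of_nonneg (by positivity)]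
  have h1 := pairC_le η (ϑ (t • η - x))
  have h2 := lerayC_le η (ϑ x)
  calc _ ≤ (t ^ (-(γ - d - 1)) * Real.exp (‖η‖ ^ γ * (1 - t ^ γ))) *
        ((‖η‖ * ‖ϑ (t • η - x)‖) * (2 * ‖ϑ x‖)) := by gcongr
    _ = _ := by ring

/-- The scalar weight used for the `L^1` factor. -/
noncomputable def wR (ν σ : ℝ) {d : ℕ} (y : Ed d) : ℝ := ‖y‖ ^ (-ν) * (1 + ‖y‖) ^ (-σ)

lemma wR_nonneg (ν σ : ℝ) {d : ℕ} (y : Ed d) : 0 ≤ wR ν σ y := by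
  unfold wR; positivity

lemma uWeight_nonneg (ν : ℝ) {d : ℕ} (y : Ed d) : 0 ≤ uWeight ν y := by
  unfold uWeight; positivity

lemma nonlin_aux (d : ℕ) (hd : 2 ≤ d) (θ γ a ν s σ β : ℝ) (hβ : 0 < β) (hβ1 : β ≤ 1)
    (hθ : 0 ≤ θ) (hθ1 : θ ≤ 1)
    (hγ : 1 ≤ γ) (hs : s + ν + 1 = γ * θ + a) (hσ : σ = ν - a) (hσ0 : 0 ≤ σ) :
    ∃ C : ℝ, 0 < C ∧ ∀ (ϑ : Ed d → EdC d) (g : Ed d → ℝ), Measurable g →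
      (∀ᵐ x : Ed d, ‖ϑ x‖ ≤ g x) → ∀ η : Ed d, β ≤ ‖η‖ → ∀ t ∈ Ioc 1 β⁻¹,
      ENNReal.ofReal (‖η‖ ^ s * uWeight ν η) * ∫⁻ x, ‖renormKernelC d γ ϑ η t x‖ₑ ≤
        ENNReal.ofReal C * ∫⁻ y, ENNReal.ofReal ((t - 1) ^ (-θ)) *
          (ENNReal.ofReal (wR ν σ y) * ENNReal.ofReal (|g y| * uWeight ν y)) *
            ENNReal.ofReal (|g (t • η - y)| * uWeight ν (t • η - y)) := by
  obtain ⟨C, hC, hpt⟩ := point_aux θ γ a ν s σ (γ - d - 1) β hβ hβ1 hθ hθ1 hγ hs hσ hσ0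
  refine ⟨2 * (2 * C), by positivity, ?_⟩
  intro ϑ g hgm hg η hη t ht
  have : Nonempty (Fin d) := ⟨⟨0, by omega⟩⟩
  have ht1 : 1 < t := ht.1
  set w : Ed d → ℝ := wR ν σ with hw
  set G : Ed d → ℝ := fun y => |g y| * uWeight ν y with hG
  have hGn : ∀ y, 0 ≤ G y := fun y => mul_nonneg (abs_nonneg _) (uWeight_nonneg ν y)
  have hwn : ∀ y, 0 ≤ w y := wR_nonneg ν σ
  have hGm : Measurable G := by
    simp only [hG, uWeight]; fun_prop
  have hwm : Measurable w := by
    have : w = fun y : Ed d => ‖y‖ ^ (-ν) * (1 + ‖y‖) ^ (-σ) := by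
      funext y; simp [hw, wR]
    rw [this]; fun_prop
  have htn : ‖t • η‖ = t * ‖η‖ := by
    rw [norm_smul, Real.norm_of_nonneg (by linarith)]
  have hT0 : 0 ≤ (t - 1) ^ (-θ) := Real.rpow_nonneg (by linarith) _
  -- the pointwise real estimate
  have real_est : ∀ y z : Ed d, y + z = t • η → y ≠ 0 → ‖y‖ ≤ ‖z‖ →
      (‖η‖ ^ s * uWeight ν η) * ((t ^ (-(γ - d - 1)) * Real.exp (‖η‖ ^ γ * (1 - t ^ γ))) * ‖η‖) *
        (|g y| * |g z|) ≤ C * ((t - 1) ^ (-θ) * (w y * G y) * G z) := by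
    intro y z hyz hy hle
    have h1 : t * ‖η‖ ≤ ‖y‖ + ‖z‖ := by rw [← htn, ← hyz]; exact norm_add_le _ _
    have h2 : ‖z‖ ≤ t * ‖η‖ + ‖y‖ := by
      rw [← htn, ← hyz]
      calc ‖z‖ = ‖(y + z) - y‖ := by congr 1; abel
        _ ≤ _ := norm_sub_le _ _
    have := hpt ‖η‖ t ‖y‖ ‖z‖ hη ht.1 ht.2 (norm_pos_iff.2 hy) hle h1 h2
    calc _ ≤ (C * (t - 1) ^ (-θ) * (‖y‖ ^ (-ν) * (1 + ‖y‖) ^ (-σ)) *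
          (Real.exp ‖y‖ * ‖y‖ ^ ν) * (Real.exp ‖z‖ * ‖z‖ ^ ν)) * (|g y| * |g z|) := by
          apply mul_le_mul_of_nonneg_right _ (by positivity)
          exact this
      _ = _ := by simp only [hw, hG, wR, uWeight]; ring
  have hae : ∀ᵐ y : Ed d, ENNReal.ofReal (‖η‖ ^ s * uWeight ν η) * ‖renormKernelC d γ ϑ η t y‖ₑ ≤
      ENNReal.ofReal (2 * C) * (ENNReal.ofReal ((t - 1) ^ (-θ)) *
        (ENNReal.ofReal (w y) * ENNReal.ofReal (G y)) * ENNReal.ofReal (G (t • η - y)) +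
        ENNReal.ofReal ((t - 1) ^ (-θ)) *
        (ENNReal.ofReal (w (t • η - y)) * ENNReal.ofReal (G (t • η - y))) *
          ENNReal.ofReal (G y)) := by
    have n1 : ∀ᵐ y : Ed d, y ≠ 0 := Measure.ae_ne volume 0
    have n2 : ∀ᵐ y : Ed d, y ≠ t • η := Measure.ae_ne volume (t • η)
    have n3 : ∀ᵐ y : Ed d, ‖ϑ (t • η - y)‖ ≤ g (t • η - y) :=
      (quasiMeasurePreserving_sub_left volume (t • η)).ae hg
    filter_upwards [n1, n2, n3, hg] with y hy hy2 hgz hgy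
    set z := t • η - y with hz
    have hz0 : z ≠ 0 := sub_ne_zero.2 (Ne.symm hy2)
    have hker := kernel_le γ ϑ η t (by linarith) y
    rw [← hz] at hker
    have hu := uWeight_nonneg ν η
    have hker2 : (‖η‖ ^ s * uWeight ν η) * ‖renormKernelC d γ ϑ η t y‖ ≤
        2 * ((‖η‖ ^ s * uWeight ν η) *
        ((t ^ (-(γ - d - 1)) * Real.exp (‖η‖ ^ γ * (1 - t ^ γ))) * ‖η‖) * (|g y| * |g z|)) := by
      have ht0 : 0 ≤ t := by linarith
      calc _ ≤ (‖η‖ ^ s * uWeight ν η) * (2 * ((t ^ (-(γ - d - 1)) *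
            Real.exp (‖η‖ ^ γ * (1 - t ^ γ))) * ‖η‖) * (‖ϑ y‖ * ‖ϑ z‖)) := by gcongr
        _ ≤ (‖η‖ ^ s * uWeight ν η) * (2 * ((t ^ (-(γ - d - 1)) *
            Real.exp (‖η‖ ^ γ * (1 - t ^ γ))) * ‖η‖) * (|g y| * |g z|)) := by
            gcongr
            · exact hgy.trans (le_abs_self _)
            · exact hgz.trans (le_abs_self _)
        _ = _ := by ring
    have conv : ∀ y z : Ed d, ENNReal.ofReal (2 * C) * (ENNReal.ofReal ((t - 1) ^ (-θ)) *
        (ENNReal.ofReal (w y) * ENNReal.ofReal (G y)) * ENNReal.ofReal (G z)) =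
        ENNReal.ofReal (2 * C * ((t - 1) ^ (-θ) * (w y * G y) * G z)) := by
      intro y z
      rw [ENNReal.ofReal_mul (p := 2 * C) (by positivity), ENNReal.ofReal_mul (mul_nonneg hT0
        (mul_nonneg (hwn y) (hGn y))), ENNReal.ofReal_mul hT0, ENNReal.ofReal_mul (hwn y)]
    rw [mul_add, conv, conv, ← ofReal_norm, ← ENNReal.ofReal_mul (by positivity)]
    rcases le_total ‖y‖ ‖z‖ with hle | hle
    · refine le_trans (ENNReal.ofReal_le_ofReal ?_) le_self_add
      have := real_est y z (by rw [hz]; abel) hy hle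
      linarith
    · refine le_trans (ENNReal.ofReal_le_ofReal ?_) le_add_self
      have := real_est z y (by rw [hz]; abel) hz0 hle
      rw [mul_comm |g z|] at this
      linarith
  rw [← lintegral_const_mul' _ _ ENNReal.ofReal_ne_top]
  refine (lintegral_mono_ae hae).trans ?_
  rw [lintegral_const_mul' _ _ ENNReal.ofReal_ne_top, lintegral_add_left (by fun_prop)]
  have sw := lintegral_sub_left_eq_self (μ := (volume : Measure (Ed d)))
    (fun y => ENNReal.ofReal ((t - 1) ^ (-θ)) *
        (ENNReal.ofReal (w y) * ENNReal.ofReal (G y)) * ENNReal.ofReal (G (t • η - y))) (t • η)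
  simp only [sub_sub_cancel] at sw
  rw [sw, ← two_mul, ← mul_assoc, ENNReal.ofReal_mul (p := 2) (q := 2 * C) (by norm_num),
    mul_comm (ENNReal.ofReal 2), show ENNReal.ofReal 2 = 2 by simp]

lemma lin_aux (d : ℕ) (γ s ν β c : ℝ) (hγ : 0 < γ) (hs : 0 ≤ s) (hβ : 0 < β) (hβ1 : β < 1) :
    ∃ C : ℝ, 0 < C ∧ ∀ (η : Ed d) (v : EdC d) (b : ℝ), ‖v‖ ≤ b →
      (‖η‖ ^ s * uWeight ν η) * ‖(β ^ c * Real.exp (‖η‖ ^ γ * (1 - β ^ (-γ)))) • v‖ ≤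
        C * (|b| * uWeight ν (β⁻¹ • η)) := by
  have hq : 0 < β ^ (-γ) - 1 := by
    have := Real.one_lt_rpow_of_pos_of_lt_one_of_neg hβ hβ1 (by linarith : -γ < 0)
    linarith
  obtain ⟨C, hC, h⟩ := rpow_le_exp_aux (s / γ) (β ^ (-γ) - 1) (by positivity) hq
  refine ⟨C * β ^ c * β ^ ν, by positivity, ?_⟩
  intro η v b hv
  rw [norm_smul, Real.norm_of_nonneg (by positivity)]
  have hn : ‖β⁻¹ • η‖ = β⁻¹ * ‖η‖ := by
    rw [norm_smul, Real.norm_of_nonneg (by positivity)]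
  simp only [uWeight, hn]
  set N := ‖η‖
  have hN : 0 ≤ N := norm_nonneg _
  have h1 := h (N ^ γ) (by positivity)
  rw [← Real.rpow_mul hN, mul_div_cancel₀ _ hγ.ne'] at h1
  have h2 : N ^ ν = β ^ ν * (β⁻¹ * N) ^ ν := by
    rw [Real.mul_rpow (by positivity) hN, Real.inv_rpow hβ.le]; field_simp
  have h3 : N ≤ β⁻¹ * N := le_mul_of_one_le_left hN ((one_le_inv₀ hβ).2 hβ1.le)
  have h4 : Real.exp ((β ^ (-γ) - 1) * N ^ γ) * Real.exp (N ^ γ * (1 - β ^ (-γ))) = 1 := by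
    rw [← Real.exp_add, ← Real.exp_zero]; congr 1; ring
  calc N ^ s * (Real.exp N * N ^ ν) * (β ^ c * Real.exp (N ^ γ * (1 - β ^ (-γ))) * ‖v‖)
      ≤ (C * Real.exp ((β ^ (-γ) - 1) * N ^ γ)) * (Real.exp (β⁻¹ * N) * N ^ ν) *
        (β ^ c * Real.exp (N ^ γ * (1 - β ^ (-γ))) * |b|) := by
        gcongr
        exact hv.trans (le_abs_self b)
    _ = C * β ^ c * N ^ ν * (|b| * Real.exp (β⁻¹ * N)) *
        (Real.exp ((β ^ (-γ) - 1) * N ^ γ) * Real.exp (N ^ γ * (1 - β ^ (-γ)))) := by ring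
    _ = _ := by rw [h4, h2]; ring

lemma lp_const_mul {α : Type*} [MeasurableSpace α] (μ : Measure α) (p : ℝ) (hp : 0 < p)
    (c : ℝ≥0∞) (hc : c ≠ ⊤) (f : α → ℝ≥0∞) :
    (∫⁻ x, (c * f x) ^ p ∂μ) ^ (1 / p) = c * (∫⁻ x, f x ^ p ∂μ) ^ (1 / p) := by
  simp_rw [ENNReal.mul_rpow_of_nonneg _ _ hp.le]
  rw [lintegral_const_mul' _ _ (ENNReal.rpow_ne_top_of_nonneg hp.le hc),
    ENNReal.mul_rpow_of_nonneg _ _ (by positivity), ← ENNReal.rpow_mul,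
    mul_one_div_cancel hp.ne', ENNReal.rpow_one]

lemma tail_core (d : ℕ) (hd : 2 ≤ d) (γ p θ a ν s σ β A : ℝ) (hγ : 1 < γ) (hp : 1 < p)
    (hβ : 0 < β) (hβ1 : β < 1) (hθ : 0 ≤ θ) (hθ1 : θ < 1) (hs0 : 0 ≤ s)
    (hs : s + ν + 1 = γ * θ + a) (hσ : σ = ν - a) (hσ0 : 0 ≤ σ)
    (hν : ν * (p / (p - 1)) < d) (hνσ : d < (ν + σ) * (p / (p - 1))) :
    ∃ M : ℝ, 0 < M ∧ ∀ ϑ : Ed d → EdC d, MemRLBall d p ν A ϑ → ∀ ρ : ℝ, β < ρ →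
      (∫⁻ η in {η : Ed d | ρ < ‖η‖},
        ENNReal.ofReal (‖renormC d γ β ϑ η‖ ^ p * uWeight ν η ^ p)) ^ (1 / p) ≤
      ENNReal.ofReal (M * ρ ^ (-s)) := by
  have hp0 : 0 < p := by linarith
  obtain ⟨C5, hC5, hlin⟩ := lin_aux d γ s ν β (γ - d - 1) (by linarith) hs0 hβ hβ1
  obtain ⟨C6, hC6, hnon⟩ := nonlin_aux d hd θ γ a ν s σ β hβ hβ1.le hθ hθ1.le hγ.le hs hσ hσ0
  set q := p / (p - 1) with hq
  have hpq : p.HolderConjugate q := Real.HolderConjugate.conjExponent hp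
  have hq0 : 0 < q := hpq.symm.pos
  set W : ℝ≥0∞ := ∫⁻ y : Ed d, ENNReal.ofReal (wR ν σ y) ^ q with hW
  have hWf : W < ⊤ := weight_aux d hd ν σ q hq0 hν hσ0 hνσ
  set K : ℝ≥0∞ := W ^ (1 / q) * ENNReal.ofReal A with hK
  have hKf : K ≠ ⊤ := ENNReal.mul_ne_top (ENNReal.rpow_ne_top_of_nonneg (by positivity) hWf.ne)
    ENNReal.ofReal_ne_top
  set T : ℝ → ℝ≥0∞ := fun t => ENNReal.ofReal ((t - 1) ^ (-θ)) with hT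
  have hTm : Measurable T := by fun_prop
  set T0 : ℝ≥0∞ := ∫⁻ t in Ioc 1 β⁻¹, T t with hT0
  have hT0f : T0 ≠ ⊤ := (time_int β⁻¹ θ ((one_le_inv₀ hβ).2 hβ1.le) hθ1).ne
  have hTKf : T0 * K ≠ ⊤ := ENNReal.mul_ne_top hT0f hKf
  set B : ℝ≥0∞ := ENNReal.ofReal C5 * ENNReal.ofReal A + ENNReal.ofReal (γ * C6) *
    ((T0 * K) ^ (p - 1) * (T0 * K * ENNReal.ofReal A ^ p)) ^ (1 / p) with hB
  have hBf : B ≠ ⊤ := by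
    refine ENNReal.add_ne_top.2 ⟨ENNReal.mul_ne_top ENNReal.ofReal_ne_top ENNReal.ofReal_ne_top,
      ENNReal.mul_ne_top ENNReal.ofReal_ne_top (ENNReal.rpow_ne_top_of_nonneg (by positivity) ?_)⟩
    exact ENNReal.mul_ne_top (ENNReal.rpow_ne_top_of_nonneg (by linarith) hTKf)
      (ENNReal.mul_ne_top hTKf (ENNReal.rpow_ne_top_of_nonneg hp0.le ENNReal.ofReal_ne_top))
  refine ⟨B.toReal + 1, by positivity, ?_⟩
  rintro ϑ ⟨-, g, hgm, -, hgA, hg⟩ ρ hρ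
  have hρ0 : 0 < ρ := by linarith
  set F : Ed d → ℝ≥0∞ := fun x => ENNReal.ofReal (|g x| * uWeight ν x) with hF
  have hFm : Measurable F := by simp only [hF, uWeight]; fun_prop
  have hFA : (∫⁻ x, F x ^ p) ^ (1 / p) ≤ ENNReal.ofReal A := by
    refine le_trans (le_of_eq ?_) hgA
    unfold wLpNorm
    congr 1
    refine lintegral_congr fun x => ?_
    rw [hF, ENNReal.ofReal_rpow_of_nonneg (mul_nonneg (abs_nonneg _) (uWeight_nonneg _ _)) hp0.le,
      Real.mul_rpow (abs_nonneg _) (uWeight_nonneg _ _)]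
  have hFAp : ∫⁻ x, F x ^ p ≤ ENNReal.ofReal A ^ p := by
    have := ENNReal.rpow_le_rpow hFA hp0.le
    rwa [← ENNReal.rpow_mul, one_div_mul_cancel hp0.ne', ENNReal.rpow_one] at this
  have hwm : Measurable (fun y : Ed d => ENNReal.ofReal (wR ν σ y)) := by
    unfold wR; fun_prop
  set k : Ed d → ℝ≥0∞ := fun y => ENNReal.ofReal (wR ν σ y) * F y with hk
  have hkm : Measurable k := hwm.mul hFm
  have hkK : ∫⁻ y, k y ≤ K := by
    have := ENNReal.lintegral_mul_le_Lp_mul_Lq volume hpq.symm hwm.aemeasurable hFm.aemeasurable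
    exact this.trans (mul_le_mul' le_rfl hFA)
  set I : Ed d → ℝ≥0∞ := fun η =>
    ∫⁻ t in Ioc 1 β⁻¹, ∫⁻ y : Ed d, T t * k y * F (t • η - y) with hI
  have hIm : Measurable I := by
    have hm : Measurable (fun z : (Ed d × ℝ) × Ed d => T z.1.2 * k z.2 * F (z.1.2 • z.1.1 - z.2)) := by
      fun_prop
    have hm2 := hm.lintegral_prod_right' (ν := (volume : Measure (Ed d)))
    exact hm2.lintegral_prod_right' (ν := volume.restrict (Ioc (1:ℝ) β⁻¹))
  have hIp : (∫⁻ η, I η ^ p) ^ (1 / p) ≤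
      ((T0 * K) ^ (p - 1) * (T0 * K * ENNReal.ofReal A ^ p)) ^ (1 / p) := by
    refine ENNReal.rpow_le_rpow ((young_aux p β⁻¹ hp T hTm k F hkm hFm).trans ?_) (by positivity)
    have : (∫⁻ t in Ioc 1 β⁻¹, T t) * ∫⁻ y, k y ≤ T0 * K := mul_le_mul' le_rfl hkK
    exact mul_le_mul' (ENNReal.rpow_le_rpow this (by linarith)) (mul_le_mul' this hFAp)
  set L : Ed d → ℝ≥0∞ := fun η => F (β⁻¹ • η) with hL
  have hLm : Measurable L := by fun_prop
  have hLp : (∫⁻ η, L η ^ p) ^ (1 / p) ≤ ENNReal.ofReal A := by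
    refine le_trans (ENNReal.rpow_le_rpow ?_ (by positivity)) hFA
    exact lintegral_smul_le β⁻¹ ((one_le_inv₀ hβ).2 hβ1.le) (fun x => F x ^ p) (by fun_prop)
  set H : Ed d → ℝ≥0∞ := (fun η => ENNReal.ofReal C5 * L η) +
    (fun η => ENNReal.ofReal (γ * C6) * I η) with hH
  have hHp : (∫⁻ η, H η ^ p) ^ (1 / p) ≤ B := by
    refine (ENNReal.lintegral_Lp_add_le (by fun_prop) (by fun_prop) hp.le).trans ?_
    rw [lp_const_mul _ _ hp0 _ ENNReal.ofReal_ne_top, lp_const_mul _ _ hp0 _ ENNReal.ofReal_ne_top]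
    exact add_le_add (mul_le_mul' le_rfl hLp) (mul_le_mul' le_rfl hIp)
  -- pointwise bound
  have hg2 : ∀ᵐ η : Ed d, ‖ϑ (β⁻¹ • η)‖ ≤ g (β⁻¹ • η) :=
    (Measure.quasiMeasurePreserving_smul volume (inv_ne_zero hβ.ne')).ae hg
  have hpt : ∀ᵐ η : Ed d, ρ < ‖η‖ →
      ENNReal.ofReal (‖renormC d γ β ϑ η‖ ^ p * uWeight ν η ^ p) ≤
        (ENNReal.ofReal (ρ ^ (-s)) * H η) ^ p := by
    filter_upwards [hg2] with η hgη hη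
    have hu := uWeight_nonneg ν η
    rw [← Real.mul_rpow (norm_nonneg _) hu, ← ENNReal.ofReal_rpow_of_nonneg (by positivity) hp0.le]
    refine ENNReal.rpow_le_rpow ?_ hp0.le
    have hb : ENNReal.ofReal (‖η‖ ^ s * uWeight ν η) * ‖renormC d γ β ϑ η‖ₑ ≤ H η := by
      have h1 := hlin η (ϑ (β⁻¹ • η)) _ hgη
      have h1' : ENNReal.ofReal (‖η‖ ^ s * uWeight ν η) *
          ‖(β ^ (γ - d - 1) * Real.exp (‖η‖ ^ γ * (1 - β ^ (-γ)))) • ϑ (β⁻¹ • η)‖ₑ ≤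
          ENNReal.ofReal C5 * L η := by
        rw [← ofReal_norm, ← ENNReal.ofReal_mul (by positivity), hL, hF,
          ← ENNReal.ofReal_mul hC5.le]
        exact ENNReal.ofReal_le_ofReal h1
      have h2 : ENNReal.ofReal (‖η‖ ^ s * uWeight ν η) *
          ‖(Complex.I * (γ : ℂ)) •
            ∫ t in Set.Ioc (1 : ℝ) β⁻¹, ∫ x : Ed d, renormKernelC d γ ϑ η t x‖ₑ ≤
          ENNReal.ofReal (γ * C6) * I η := by
        have e1 : ‖Complex.I * (γ : ℂ)‖ₑ = ENNReal.ofReal γ := by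
          rw [← ofReal_norm]; simp [abs_of_pos (by linarith : 0 < γ)]
        rw [enorm_smul, e1, ENNReal.ofReal_mul (p := γ) (by linarith), mul_left_comm, mul_assoc]
        refine mul_le_mul' le_rfl ?_
        calc _ ≤ ENNReal.ofReal (‖η‖ ^ s * uWeight ν η) *
              ∫⁻ t in Ioc 1 β⁻¹, ∫⁻ x : Ed d, ‖renormKernelC d γ ϑ η t x‖ₑ := by
              refine mul_le_mul' le_rfl ((enorm_integral_le_lintegral_enorm _).trans ?_)
              exact lintegral_mono fun t => enorm_integral_le_lintegral_enorm _
          _ = ∫⁻ t in Ioc 1 β⁻¹, ENNReal.ofReal (‖η‖ ^ s * uWeight ν η) *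
              ∫⁻ x : Ed d, ‖renormKernelC d γ ϑ η t x‖ₑ :=
              (lintegral_const_mul' _ _ ENNReal.ofReal_ne_top).symm
          _ ≤ ∫⁻ t in Ioc 1 β⁻¹, ENNReal.ofReal C6 *
              ∫⁻ y : Ed d, T t * k y * F (t • η - y) := by
              refine setLIntegral_mono' measurableSet_Ioc fun t ht => ?_
              exact hnon ϑ g hgm hg η (by linarith) t ht
          _ = _ := lintegral_const_mul' _ _ ENNReal.ofReal_ne_top
      calc _ ≤ ENNReal.ofReal (‖η‖ ^ s * uWeight ν η) * (_ + _) :=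
            mul_le_mul' le_rfl (enorm_add_le _ _)
        _ ≤ _ := by rw [mul_add]; exact add_le_add h1' h2
    have hr : 1 ≤ ρ ^ (-s) * ‖η‖ ^ s := by
      rw [Real.rpow_neg hρ0.le, inv_mul_eq_div, one_le_div (by positivity)]
      exact Real.rpow_le_rpow hρ0.le hη.le hs0
    calc ENNReal.ofReal (‖renormC d γ β ϑ η‖ * uWeight ν η)
        ≤ ENNReal.ofReal (ρ ^ (-s) * ((‖η‖ ^ s * uWeight ν η) * ‖renormC d γ β ϑ η‖)) := by
          apply ENNReal.ofReal_le_ofReal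
          have : 0 ≤ ‖renormC d γ β ϑ η‖ * uWeight ν η := by positivity
          nlinarith
      _ = ENNReal.ofReal (ρ ^ (-s)) *
          (ENNReal.ofReal (‖η‖ ^ s * uWeight ν η) * ‖renormC d γ β ϑ η‖ₑ) := by
          rw [ENNReal.ofReal_mul (by positivity), ENNReal.ofReal_mul (by positivity), ofReal_norm]
      _ ≤ _ := mul_le_mul' le_rfl hb
  have hms : MeasurableSet {η : Ed d | ρ < ‖η‖} := measurableSet_lt measurable_const measurable_norm
  calc _ ≤ (∫⁻ η, (ENNReal.ofReal (ρ ^ (-s)) * H η) ^ p) ^ (1 / p) := by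
        refine ENNReal.rpow_le_rpow ?_ (by positivity)
        refine le_trans (lintegral_mono_ae ?_) (setLIntegral_le_lintegral {η : Ed d | ρ < ‖η‖} _)
        exact (ae_restrict_iff' hms).2 hpt
    _ = ENNReal.ofReal (ρ ^ (-s)) * (∫⁻ η, H η ^ p) ^ (1 / p) :=
        lp_const_mul _ _ hp0 _ ENNReal.ofReal_ne_top _
    _ ≤ ENNReal.ofReal (ρ ^ (-s)) * ENNReal.ofReal (B.toReal + 1) := by
        refine mul_le_mul' le_rfl (hHp.trans ?_)
        rw [ENNReal.le_ofReal_iff_toReal_le hBf (by positivity)]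
        linarith
    _ = _ := by rw [← ENNReal.ofReal_mul (by positivity), mul_comm]

/-- invariance of an equitight subset of the invariant ball. -/
theorem renorm_invariant_equitight_set
    (d : ℕ) (hd : 2 ≤ d) (γ : ℝ) (hγ : 1 < γ) (p r ν κ : ℝ)
    (hp : 1 < p) (hr : 1 < r)
    (h1 : 1 / r = 2 / p + (2 * ν + κ) / d - 1)
    (h2 : κ < d / r)
    (h3 : (d - 1) / 2 * (1 - 2 / p) < ν)
    (h4 : ν < d * (p - 1) / p)
    (h5 : p ≤ 2 * r)
    (h6 : 0 < max ν κ)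
    (h7 : (d - 1) * (1 / r - 1 / p) ≤ ν + κ)
    (h8 : max 0 (d + p * ((γ - d - 1) + ν)) < d * (r - p) / r + p * (ν + κ + 1))
    (h9 : d * (r - p) / r + p * (ν + κ + 1) < γ * p * (r - 1) / r)
    (h10 : γ < γ * p * (r - 1) / r - d * (r - p) / r - p * (ν + κ + 1))
    (h11 : r / (r - 1) < p)
    (m : ℝ) (hm : m = p * (r - 1) / r - p / γ * (κ + 1 + ν) - d * (r - p) / (r * γ))
    (β : ℝ) (hβ : β ∈ Set.Ioo (0 : ℝ) 1)
    (A : ℝ) (hA : 0 < A)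
    (hinv : ∀ ϑ : Ed d → EdC d, MemRLBall d p ν A ϑ → MemRLBall d p ν A (renormC d γ β ϑ)) :
    ∃ M : ℝ, 0 < M ∧
      ∀ ϑ : Ed d → EdC d, MemRLBall d p ν A ϑ → tailBound d p ν γ m M β ϑ →
        MemRLBall d p ν A (renormC d γ β ϑ) ∧ tailBound d p ν γ m M β (renormC d γ β ϑ) := by
  have hp0 : 0 < p := by linarith
  have hr0 : 0 < r := by linarith
  have hγ0 : 0 < γ := by linarith
  have hd0 : (0 : ℝ) < d := by
    have : 0 < d := by omega
    exact_mod_cast this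
  have hp1 : 0 < p - 1 := by linarith
  have hκ : κ = d / r - 2 * d / p - 2 * ν + d := by
    have h1' := h1
    field_simp at h1' ⊢
    linarith
  have hsm : γ * m / p = γ - γ / r - 1 + ν - d + d / p := by
    rw [hm, hκ]
    field_simp
    ring
  have hs0 : 0 ≤ γ * m / p := by
    have e : γ * m = γ * p * (r - 1) / r - d * (r - p) / r - p * (ν + κ + 1) := by
      rw [hm]; field_simp; ring
    have : 0 < γ * m := by rw [e]; linarith
    positivity
  have h4' : ν < d - d / p := by
    have : (d : ℝ) * (p - 1) / p = d - d / p := by field_simp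
    linarith
  have hγr : 0 < γ / (2 * r) := by positivity
  have hr2 : 1 / (2 * r) < 1 := by
    rw [div_lt_one (by positivity)]; linarith
  have hr3 : 0 < 1 / (2 * r) := by positivity
  obtain ⟨M, hM, h⟩ := tail_core d hd γ p (1 - 1 / (2 * r)) (2 * ν - d + d / p - γ / (2 * r)) ν
    (γ * m / p) (d - d / p - ν + γ / (2 * r)) β A hγ hp hβ.1 hβ.2 (by linarith) (by linarith) hs0
    (by rw [hsm]; field_simp; ring) (by ring) (by linarith)
    (by
      rw [mul_div_assoc', div_lt_iff₀ hp1]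
      rw [lt_div_iff₀ hp0] at h4
      linarith)
    (by
      rw [mul_div_assoc', lt_div_iff₀ hp1]
      have : ((ν + ((d : ℝ) - d / p - ν + γ / (2 * r))) * p) = d * (p - 1) + γ / (2 * r) * p := by
        field_simp; ring
      rw [this]
      have : 0 < γ / (2 * r) * p := by positivity
      linarith)
  exact ⟨M, hM, fun ϑ hϑ _ => ⟨hinv ϑ hϑ, fun ρ hρ => h ϑ hϑ ρ hρ⟩⟩
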